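/- Characterization of the leading-order terms: for D ≥ 2 and any (D+1)-tuple σ of permutations of {1,…,k} whose D-bubble is connected, C_D(σ_D) = 1, the N-exponent attains its maximal value, −(D−1)·k + F(σ) − F_D(σ_D) = 1, if and only if σ has degree zero, i.e. F(σ) = D(D−1)/2 · k + D. -/

import Mathlib

/-- Number of cycles of a permutation counting fixed points: the number of orbits
on `Fin k` of the cyclic group generated by `τ`. -/
noncomputable def cycleCount {k : ℕ} (τ : Equiv.Perm (Fin k)) : ℕ :=
  Nat.card (MulAction.orbitRel.Quotient (Subgroup.zpowers τ) (Fin k))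

/-- Total number of faces of the `(D+1)`-colored graph encoded by `σ`:
`F(σ) = Σ_{c₁ < c₂} c(σ⁽ᶜ¹⁾ ∘ (σ⁽ᶜ²⁾)⁻¹)`. -/
noncomputable def faceCount {k D : ℕ} (σ : Fin (D + 1) → Equiv.Perm (Fin k)) : ℕ :=
  ∑ p ∈ Finset.univ.filter (fun p : Fin (D + 1) × Fin (D + 1) => p.1 < p.2),
    cycleCount (σ p.1 * (σ p.2)⁻¹)

/-- Number of connected components of the `(D+1)`-colored graph encoded by `σ`:
the number of orbits on `Fin k` of the subgroup generated by `(σ⁽⁰⁾)⁻¹ ∘ σ⁽ᶜ⁾`, `1 ≤ c ≤ D`. -/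
noncomputable def compCount {k D : ℕ} (σ : Fin (D + 1) → Equiv.Perm (Fin k)) : ℕ :=
  Nat.card (MulAction.orbitRel.Quotient
    (Subgroup.closure
      {g : Equiv.Perm (Fin k) | ∃ c : Fin (D + 1), c ≠ 0 ∧ g = (σ 0)⁻¹ * σ c}) (Fin k))

/-- Number of faces of the `D`-bubble (colors `1,…,D`) of `σ`:
`F_D(σ_D) = Σ_{1 ≤ c₁ < c₂ ≤ D} c(σ⁽ᶜ¹⁾ ∘ (σ⁽ᶜ²⁾)⁻¹)`. -/
noncomputable def bubbleFaceCount {k D : ℕ} (σ : Fin (D + 1) → Equiv.Perm (Fin k)) : ℕ :=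
  ∑ p ∈ Finset.univ.filter
      (fun p : Fin (D + 1) × Fin (D + 1) => 0 < p.1 ∧ p.1 < p.2),
    cycleCount (σ p.1 * (σ p.2)⁻¹)

/-- Number of connected components of the `D`-bubble of `σ`: the number of orbits
on `Fin k` of the subgroup generated by `(σ⁽¹⁾)⁻¹ ∘ σ⁽ᶜ⁾`, `2 ≤ c ≤ D`. -/
noncomputable def bubbleCompCount {k D : ℕ} (σ : Fin (D + 1) → Equiv.Perm (Fin k)) : ℕ :=
  Nat.card (MulAction.orbitRel.Quotient
    (Subgroup.closure
      {g : Equiv.Perm (Fin k) | ∃ c : Fin (D + 1), 1 < c ∧ g = (σ 1)⁻¹ * σ c}) (Fin k))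

/-!
Put `d σ τ = k - c(σ τ⁻¹)`, the Cayley distance of permutations. With `G = ∑ d(σ⁽⁰⁾, σ⁽ⁱ⁾)` over the
`D` bubble colors and `Φ = ∑ d(σ⁽ⁱ⁾, σ⁽ʲ⁾)` over ordered pairs of distinct ones, the exponent is
`k - G`, while degree zero means `Φ + 2 G = 2 D (k - 1)`. For a connected bubble `G ≥ k - 1`. A
cyclic ordering of the bubble colors makes the bubble a map on an orientable surface, whose genus is
nonnegative; averaging this over all orderings gives `Φ ≥ 2 (D - 1) (k - 1)`. Finally
`Φ ≤ 2 (D - 1) G` by the triangle inequality. Hence either of the two equations forces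
`G = k - 1` and `Φ = 2 (D - 1) (k - 1)`.

The connectivity bounds become linear algebra because `d σ τ` is the rank of the difference of the
operators `f ↦ f ∘ σ` and `f ↦ f ∘ τ` on `ℚᵏ`.
-/

open Finset Module

section OrderedPairs

variable {ι M : Type*} [Fintype ι]

lemma sum_offDiag_fst_add [AddCommMonoid M] (f : ι → M) :
    ∑ x ∈ univ.offDiag, f x.1 + ∑ i, f i = Fintype.card ι • ∑ i, f i := by
  classical
  calc ∑ x ∈ univ.offDiag, f x.1 + ∑ i, f i
      = ∑ x ∈ univ.offDiag, f x.1 + ∑ x ∈ univ.diag, f x.1 := by simp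
    _ = ∑ x ∈ univ ×ˢ univ, f x.1 := by
        rw [← diag_union_offDiag, sum_union (disjoint_diag_offDiag _), add_comm]
    _ = Fintype.card ι • ∑ i, f i := by rw [sum_product_right]; simp

lemma sum_offDiag_swap [AddCommMonoid M] (f : ι × ι → M) :
    ∑ x ∈ univ.offDiag, f x.swap = ∑ x ∈ univ.offDiag, f x :=
  sum_equiv (Equiv.prodComm ι ι) (by simp [eq_comm]) (by simp)

lemma sum_offDiag_eq_two_nsmul [LinearOrder ι] [AddCommMonoid M] {f : ι → ι → M}
    (hf : ∀ i j, f i j = f j i) :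
    ∑ x ∈ univ.offDiag, f x.1 x.2 = 2 • ∑ x : ι × ι with x.1 < x.2, f x.1 x.2 := by
  have hlt : univ.offDiag.filter (fun x : ι × ι => x.1 < x.2) = univ.filter fun x => x.1 < x.2 := by
    ext; simpa using ne_of_lt
  have hgt : ∑ x ∈ univ.offDiag with ¬x.1 < x.2, f x.1 x.2 =
      ∑ x : ι × ι with x.1 < x.2, f x.1 x.2 :=
    sum_equiv (Equiv.prodComm ι ι) (by grind) fun x _ => hf _ _
  rw [← sum_filter_add_sum_filter_not _ fun x : ι × ι => x.1 < x.2, hlt, hgt, two_nsmul]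

lemma card_perm_nsmul_sum_offDiag [DecidableEq ι] [AddCommMonoid M] (f : ι → ι → M) {i j : ι}
    (hij : i ≠ j) :
    Fintype.card (Equiv.Perm ι) • ∑ x ∈ univ.offDiag, f x.1 x.2 =
      #(univ : Finset ι).offDiag • ∑ p : Equiv.Perm ι, f (p i) (p j) := by
  have hpair : ∀ x ∈ (univ : Finset ι).offDiag,
      ∑ p : Equiv.Perm ι, f (p x.1) (p x.2) = ∑ p : Equiv.Perm ι, f (p i) (p j) := by
    intro x hx
    obtain ⟨e, hi, hj⟩ := MulAction.is_two_pretransitive_iff.1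
      (Equiv.Perm.isMultiplyPretransitive ι 2) hij (mem_offDiag.1 hx).2.2
    rw [← hi, ← hj]
    exact Equiv.sum_comp (Equiv.mulRight e) fun p => f (p i) (p j)
  calc _ = ∑ _p : Equiv.Perm ι, ∑ x ∈ univ.offDiag, f x.1 x.2 := by simp
    _ = ∑ p : Equiv.Perm ι, ∑ x ∈ univ.offDiag, f (p x.1) (p x.2) :=
        sum_congr rfl fun p _ => (sum_equiv (p.prodCongr p) (by simp) (by simp)).symm
    _ = ∑ x ∈ univ.offDiag, ∑ p : Equiv.Perm ι, f (p x.1) (p x.2) := sum_comm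
    _ = _ := by rw [sum_congr rfl hpair, sum_const]

lemma card_sub_one_mul_le_sum_offDiag (f : ι → ι → ℕ) {c : ι → ι} (hc : ∀ i, c i ≠ i) {m : ℕ}
    (hm : ∀ p : Equiv.Perm ι, m ≤ ∑ i, f (p i) (p (c i))) :
    (Fintype.card ι - 1) * m ≤ ∑ x ∈ univ.offDiag, f x.1 x.2 := by
  classical
  set n := Fintype.card ι
  set N := Fintype.card (Equiv.Perm ι)
  rcases n.eq_zero_or_pos with hn | hn
  · simp [hn]
  have hsum : n * (N * ∑ x ∈ univ.offDiag, f x.1 x.2) =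
      #(univ : Finset ι).offDiag * ∑ i, ∑ p : Equiv.Perm ι, f (p i) (p (c i)) := by
    calc _ = ∑ _i : ι, N * ∑ x ∈ univ.offDiag, f x.1 x.2 := by simp [n]
      _ = ∑ i, #(univ : Finset ι).offDiag * ∑ p : Equiv.Perm ι, f (p i) (p (c i)) :=
          sum_congr rfl fun i _ => card_perm_nsmul_sum_offDiag f (hc i).symm
      _ = _ := (mul_sum _ _ _).symm
  have hpairs : #(univ : Finset ι).offDiag = n * (n - 1) := by
    rw [offDiag_card, card_univ, Nat.mul_sub_one]
  refine Nat.le_of_mul_le_mul_left ?_ (Nat.mul_pos hn (Fintype.card_pos : 0 < N))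
  calc n * N * ((n - 1) * m) = n * (n - 1) * ∑ _p : Equiv.Perm ι, m := by
        rw [sum_const, card_univ, smul_eq_mul]; ring
    _ ≤ n * (n - 1) * ∑ p : Equiv.Perm ι, ∑ i, f (p i) (p (c i)) :=
        Nat.mul_le_mul_left _ (sum_le_sum fun p _ => hm p)
    _ = n * N * ∑ x ∈ univ.offDiag, f x.1 x.2 := by rw [sum_comm, ← hpairs, ← hsum, mul_assoc]

end OrderedPairs

section RankOfFamilies

lemma range_lsum_subtype {R M ι : Type*} [Semiring R] [AddCommMonoid M] [Module R M] [Fintype ι]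
    [DecidableEq ι] (P : ι → Submodule R M) :
    LinearMap.range (LinearMap.lsum R (fun i => P i) ℕ fun i => (P i).subtype) = ⨆ i, P i := by
  refine le_antisymm ?_ (iSup_le fun i v hv => ⟨Pi.single i ⟨v, hv⟩, ?_⟩)
  · rintro _ ⟨v, rfl⟩
    simpa using sum_mem fun i _ => Submodule.mem_iSup_of_mem i (v i).2
  · exact LinearMap.lsum_piSingle (R := R) (φ := fun i => P i) ℕ _ i ⟨v, hv⟩

variable {K V W ι : Type*} [DivisionRing K] [AddCommGroup V] [Module K V] [AddCommGroup W]
  [Module K W] [Fintype ι]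

lemma finrank_iSup_le_sum (R : ι → Submodule K W) [∀ i, FiniteDimensional K (R i)] :
    finrank K (⨆ i, R i : Submodule K W) ≤ ∑ i, finrank K (R i) := by
  classical
  rw [← range_lsum_subtype, ← finrank_pi_fintype]
  exact LinearMap.finrank_range_le _

/- The relation `∑ i, A i = 0` makes `V → ∏ i, range (A i) → W` a complex, so the rank of its first
map is at most the nullity of the second. -/
lemma finrank_iSup_range_add_finrank_le [FiniteDimensional K V] {A : ι → V →ₗ[K] W}
    (hA : ∑ i, A i = 0) :
    finrank K (⨆ i, LinearMap.range (A i) : Submodule K W) + finrank K V ≤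
      ∑ i, finrank K (LinearMap.range (A i)) +
        finrank K (⨅ i, LinearMap.ker (A i) : Submodule K V) := by
  classical
  let β := LinearMap.pi fun i => (A i).rangeRestrict
  let δ := LinearMap.lsum K (fun i => LinearMap.range (A i)) ℕ fun i =>
    (LinearMap.range (A i)).subtype
  have hcomplex : LinearMap.range β ≤ LinearMap.ker δ := by
    rintro _ ⟨v, rfl⟩
    simpa [δ, β] using LinearMap.congr_fun hA v
  have hker : LinearMap.ker β = ⨅ i, LinearMap.ker (A i) := by
    simp only [β, LinearMap.ker_pi, LinearMap.ker_rangeRestrict]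
  have hβ := LinearMap.finrank_range_add_finrank_ker β
  have hδ := LinearMap.finrank_range_add_finrank_ker δ
  rw [hker] at hβ
  rw [range_lsum_subtype, finrank_pi_fintype] at hδ
  have := Submodule.finrank_mono hcomplex
  lia

end RankOfFamilies

section Orbits

variable {G α : Type*} [Group G] [MulAction G α]

lemma orbitRel_closure_le {S : Set G} {r : Setoid α} (h : ∀ g ∈ S, ∀ x, r (g • x) x) :
    MulAction.orbitRel (Subgroup.closure S) α ≤ r := by
  rintro _ y ⟨⟨g, hg⟩, rfl⟩
  change r (g • y) y
  induction hg using Subgroup.closure_induction generalizing y with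
  | mem g hg => exact h g hg y
  | one => simp
  | mul a b _ _ ha hb => simpa only [mul_smul] using r.trans (ha (y := b • y)) (hb (y := y))
  | inv a _ ha => simpa only [smul_inv_smul] using r.symm (ha (y := a⁻¹ • y))

lemma finrank_invariant_functions (K : Type*) [DivisionRing K] [Finite α] (P : Submodule K (α → K))
    (hP : ∀ f, f ∈ P ↔ ∀ (g : G) x, f (g • x) = f x) :
    finrank K P = Nat.card (MulAction.orbitRel.Quotient G α) := by
  let q : α → MulAction.orbitRel.Quotient G α := Quotient.mk _
  have hq : Function.Surjective q := Quotient.mk_surjective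
  have hrange : P = LinearMap.range (LinearMap.funLeft K K q) := by
    ext f
    rw [hP, LinearMap.mem_range]
    constructor
    · intro hf
      exact ⟨Quotient.lift f (by rintro _ y ⟨g, rfl⟩; exact hf g y), rfl⟩
    · rintro ⟨h, rfl⟩ g x
      exact congrArg h (Quotient.sound ⟨g, rfl⟩)
  have := Fintype.ofFinite (MulAction.orbitRel.Quotient G α)
  rw [hrange, LinearMap.finrank_range_of_inj (LinearMap.funLeft_injective_of_surjective K K q hq),
    finrank_fintype_fun_eq_card, Nat.card_eq_fintype_card]

end Orbits

section CayleyDistance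

variable {α : Type*}

/-- The operator `f ↦ f ∘ σ - f ∘ τ` on rational functions, whose rank is the Cayley distance of `σ`
and `τ`. -/
def pullbackSub (σ τ : Equiv.Perm α) : (α → ℚ) →ₗ[ℚ] (α → ℚ) :=
  LinearMap.funLeft ℚ ℚ σ - LinearMap.funLeft ℚ ℚ τ

@[simp]
lemma pullbackSub_apply (σ τ : Equiv.Perm α) (f : α → ℚ) (x : α) :
    pullbackSub σ τ f x = f (σ x) - f (τ x) := rfl

lemma pullbackSub_self (σ : Equiv.Perm α) : pullbackSub σ σ = 0 := sub_self _

lemma neg_pullbackSub (σ τ : Equiv.Perm α) : -pullbackSub σ τ = pullbackSub τ σ := neg_sub _ _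

lemma pullbackSub_add_pullbackSub (σ τ ρ : Equiv.Perm α) :
    pullbackSub σ τ + pullbackSub τ ρ = pullbackSub σ ρ := sub_add_sub_cancel _ _ _

lemma pullbackSub_single [DecidableEq α] (σ τ : Equiv.Perm α) (x : α) :
    pullbackSub σ τ (Pi.single (τ x) 1) = Pi.single (σ⁻¹ (τ x)) 1 - Pi.single x 1 := by
  ext y
  simp [Pi.single_apply, Equiv.eq_symm_apply]

/-- The Cayley distance of two permutations, which is the least number of transpositions whose
product is `σ * τ⁻¹`. It is encoded as a rank because the triangle inequality and the bounds for
connected families are then statements of linear algebra. -/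
noncomputable def cayleyDist (σ τ : Equiv.Perm α) : ℕ :=
  finrank ℚ (LinearMap.range (pullbackSub σ τ))

lemma cayleyDist_comm (σ τ : Equiv.Perm α) : cayleyDist σ τ = cayleyDist τ σ := by
  rw [cayleyDist, cayleyDist, ← neg_pullbackSub, LinearMap.range_neg]

lemma cayleyDist_triangle [Finite α] (σ τ ρ : Equiv.Perm α) :
    cayleyDist σ ρ ≤ cayleyDist σ τ + cayleyDist τ ρ := by
  rw [cayleyDist, ← pullbackSub_add_pullbackSub σ τ ρ]
  exact (Submodule.finrank_mono (LinearMap.range_add_le _ _)).trans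
    (Submodule.finrank_add_le_finrank_add_finrank _ _)

lemma mem_ker_pullbackSub_iff {σ τ : Equiv.Perm α} {f : α → ℚ} :
    f ∈ LinearMap.ker (pullbackSub σ τ) ↔
      ∀ (g : Subgroup.zpowers (σ * τ⁻¹)) x, f (g • x) = f x := by
  rw [LinearMap.mem_ker]
  constructor
  · intro hf
    have hgen : ∀ g ∈ ({σ * τ⁻¹} : Set (Equiv.Perm α)), ∀ x, Setoid.ker f (g • x) x := by
      rintro _ rfl x
      simpa [sub_eq_zero, Setoid.ker_def] using congrFun hf (τ⁻¹ x)
    rw [Subgroup.zpowers_eq_closure]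
    exact fun g x => orbitRel_closure_le hgen ⟨g, rfl⟩
  · intro hf
    ext x
    simpa [sub_eq_zero, Subgroup.smul_def] using
      hf ⟨σ * τ⁻¹, Subgroup.mem_zpowers _⟩ (τ x)

lemma cayleyDist_add_card_orbits [Fintype α] (σ τ : Equiv.Perm α) :
    cayleyDist σ τ + Nat.card (MulAction.orbitRel.Quotient (Subgroup.zpowers (σ * τ⁻¹)) α) =
      Fintype.card α := by
  rw [cayleyDist, ← finrank_invariant_functions ℚ _ fun _ => mem_ker_pullbackSub_iff,
    LinearMap.finrank_range_add_finrank_ker, finrank_fintype_fun_eq_card]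

lemma sum_offDiag_cayleyDist_le {ι : Type*} [Fintype ι] [Finite α] (ρ : Equiv.Perm α)
    (τ : ι → Equiv.Perm α) :
    ∑ x ∈ univ.offDiag, cayleyDist (τ x.1) (τ x.2) + 2 * ∑ i, cayleyDist ρ (τ i) ≤
      2 * (Fintype.card ι * ∑ i, cayleyDist ρ (τ i)) := by
  have htriangle : ∑ x ∈ univ.offDiag, cayleyDist (τ x.1) (τ x.2) ≤
      ∑ x ∈ univ.offDiag, (cayleyDist ρ (τ x.1) + cayleyDist ρ (τ x.2)) :=
    sum_le_sum fun x _ => by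
      rw [cayleyDist_comm ρ (τ x.1)]
      exact cayleyDist_triangle _ _ _
  have hfst := sum_offDiag_fst_add fun i => cayleyDist ρ (τ i)
  have hsnd := sum_offDiag_swap fun x : ι × ι => cayleyDist ρ (τ x.1)
  simp only [Prod.fst_swap, smul_eq_mul] at hfst hsnd
  rw [sum_add_distrib, hsnd] at htriangle
  lia

end CayleyDistance

/-- Connectedness of the bipartite edge-colored graph with vertices `α ⊔ α` in which the edge of
color `i` at the white vertex `x` ends at the black vertex `τ i x`. The group acting here moves
white vertices along pairs of edges. -/
def IsConnectedTuple {α ι : Type*} (τ : ι → Equiv.Perm α) : Prop :=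
  MulAction.IsPretransitive
    (Subgroup.closure {g : Equiv.Perm α | ∃ i j, g = (τ i)⁻¹ * τ j}) α

namespace IsConnectedTuple

variable {α ι : Type*} {τ : ι → Equiv.Perm α}

lemma comp_surjective {κ : Type*} (h : IsConnectedTuple τ) {e : κ → ι}
    (he : Function.Surjective e) : IsConnectedTuple (τ ∘ e) := by
  have hset : {g | ∃ i j, g = ((τ ∘ e) i)⁻¹ * (τ ∘ e) j} = {g | ∃ i j, g = (τ i)⁻¹ * τ j} := by
    ext g
    simp [he.exists]
  rwa [IsConnectedTuple, hset]

lemma rel (h : IsConnectedTuple τ) {r : Setoid α} (hr : ∀ i j x, r ((τ i)⁻¹ (τ j x)) x) (x y : α) :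
    r x y := by
  refine orbitRel_closure_le ?_ (MulAction.IsPretransitive.exists_smul_eq (self := h) y x)
  rintro _ ⟨i, j, rfl⟩ z
  exact hr i j z

lemma eq_const (h : IsConnectedTuple τ) {ρ : Equiv.Perm α} {f : α → ℚ}
    (hf : ∀ i, pullbackSub ρ (τ i) f = 0) (x y : α) : f x = f y := by
  have hagree : ∀ i z, f (ρ z) = f (τ i z) := fun i z => sub_eq_zero.1 (congrFun (hf i) z)
  have hrel : ∀ i j z, Setoid.ker (f ∘ ρ) ((τ i)⁻¹ (τ j z)) z := fun i j z => by
    rw [Setoid.ker_def, Function.comp_apply, hagree i, Equiv.Perm.coe_inv, Equiv.apply_symm_apply]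
    exact (hagree j z).symm
  simpa [Setoid.ker_def] using h.rel hrel (ρ⁻¹ x) (ρ⁻¹ y)

lemma finrank_le_one (h : IsConnectedTuple τ) {ρ : Equiv.Perm α} {P : Submodule ℚ (α → ℚ)}
    (hP : ∀ f ∈ P, ∀ i, pullbackSub ρ (τ i) f = 0) : finrank ℚ P ≤ 1 := by
  have hle : P ≤ Submodule.span ℚ {(1 : α → ℚ)} := by
    intro f hf
    rw [Submodule.mem_span_singleton]
    rcases isEmpty_or_nonempty α with _ | ⟨⟨x₀⟩⟩
    · exact ⟨0, Subsingleton.elim _ _⟩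
    · exact ⟨f x₀, funext fun x => by simpa using h.eq_const (hP f hf) x₀ x⟩
  exact (Submodule.finrank_mono hle).trans ((finrank_span_le_card _).trans (by simp))

lemma single_sub_single_mem [DecidableEq α] (h : IsConnectedTuple τ) {ρ : Equiv.Perm α}
    {P : Submodule ℚ (α → ℚ)} (hP : ∀ i f, pullbackSub ρ (τ i) f ∈ P) (x y : α) :
    (Pi.single x 1 - Pi.single y 1 : α → ℚ) ∈ P := by
  let r : Setoid α := Setoid.ker fun x => P.mkQ (Pi.single x 1)
  have hr : ∀ {x y}, r x y ↔ (Pi.single x 1 - Pi.single y 1 : α → ℚ) ∈ P :=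
    Submodule.Quotient.eq P
  refine hr.1 (h.rel (fun i j z => hr.2 ?_) x y)
  have hsub : pullbackSub (τ i) (τ j) = pullbackSub ρ (τ j) - pullbackSub ρ (τ i) :=
    (sub_sub_sub_cancel_left _ _ _).symm
  rw [← pullbackSub_single, hsub]
  exact P.sub_mem (hP j _) (hP i _)

lemma card_le_finrank_add_one [Fintype α] (h : IsConnectedTuple τ) {ρ : Equiv.Perm α}
    {P : Submodule ℚ (α → ℚ)} (hP : ∀ i f, pullbackSub ρ (τ i) f ∈ P) :
    Fintype.card α ≤ finrank ℚ P + 1 := by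
  classical
  rcases isEmpty_or_nonempty α with _ | ⟨⟨x₀⟩⟩
  · simp
  let L := Submodule.span ℚ {(Pi.single x₀ 1 : α → ℚ)}
  have htop : (⊤ : Submodule ℚ (α → ℚ)) ≤ P ⊔ L := by
    rw [← (Pi.basisFun ℚ α).span_eq, Submodule.span_le]
    rintro _ ⟨x, rfl⟩
    rw [Pi.basisFun_apply]
    exact Submodule.mem_sup.2 ⟨_, h.single_sub_single_mem hP x x₀, _,
      Submodule.mem_span_singleton_self _, sub_add_cancel _ _⟩
  calc Fintype.card α = finrank ℚ (⊤ : Submodule ℚ (α → ℚ)) := by simp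
    _ ≤ finrank ℚ (P ⊔ L : Submodule ℚ (α → ℚ)) := Submodule.finrank_mono htop
    _ ≤ finrank ℚ P + finrank ℚ L := Submodule.finrank_add_le_finrank_add_finrank _ _
    _ ≤ finrank ℚ P + 1 := by grw [finrank_span_le_card]; simp

lemma card_le_sum_cayleyDist_add_one [Fintype α] [Fintype ι] (h : IsConnectedTuple τ)
    (ρ : Equiv.Perm α) : Fintype.card α ≤ ∑ i, cayleyDist ρ (τ i) + 1 :=
  (h.card_le_finrank_add_one fun i f =>
    Submodule.mem_iSup_of_mem i (LinearMap.mem_range_self (pullbackSub ρ (τ i)) f)).trans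
    (Nat.add_le_add_right (finrank_iSup_le_sum _) 1)

/- Gluing a disc into every cycle of the graph with alternating colors `i`, `c i` gives a surface of
Euler characteristic `2 * card α - ∑ i, cayleyDist (τ i) (τ (c i))`. -/
lemma two_mul_card_le_sum_cayleyDist_cycle [Fintype α] [Fintype ι] [Nonempty ι]
    (h : IsConnectedTuple τ) {c : Equiv.Perm ι} (hc : c.IsCycleOn Set.univ) :
    2 * Fintype.card α ≤ ∑ i, cayleyDist (τ i) (τ (c i)) + 2 := by
  let i₀ : ι := Classical.arbitrary ι
  have hchain : ∀ (P : Submodule ℚ (α → ℚ)) (f : α → ℚ),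
      (∀ i, pullbackSub (τ i) (τ (c i)) f ∈ P) → ∀ i, pullbackSub (τ i₀) (τ i) f ∈ P := by
    intro P f hf i
    obtain ⟨n, rfl⟩ := hc.exists_pow_eq' Set.finite_univ (Set.mem_univ i₀) (Set.mem_univ i)
    induction n with
    | zero => simp [pullbackSub_self]
    | succ n ih =>
      rw [← pullbackSub_add_pullbackSub _ (τ ((c ^ n) i₀)), pow_succ', Equiv.Perm.mul_apply]
      exact P.add_mem ih (hf _)
  have hsum : ∑ i, pullbackSub (τ i) (τ (c i)) = 0 := by
    simp only [pullbackSub, sum_sub_distrib]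
    rw [Equiv.sum_comp c fun i => LinearMap.funLeft ℚ ℚ (τ i), sub_self]
  have hrange := h.card_le_finrank_add_one fun i f =>
    hchain (⨆ i, LinearMap.range (pullbackSub (τ i) (τ (c i)))) f
      (fun i => Submodule.mem_iSup_of_mem i ⟨f, rfl⟩) i
  have hker : finrank ℚ
      (⨅ i, LinearMap.ker (pullbackSub (τ i) (τ (c i))) : Submodule ℚ (α → ℚ)) ≤ 1 :=
    h.finrank_le_one fun f hf i => by
      simpa using hchain ⊥ f (fun i => by simpa using (Submodule.mem_iInf _).1 hf i) i
  have hcomplex := finrank_iSup_range_add_finrank_le hsum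
  rw [finrank_fintype_fun_eq_card] at hcomplex
  change _ ≤ ∑ i, cayleyDist (τ i) (τ (c i)) + _ at hcomplex
  lia

lemma mul_le_sum_offDiag_cayleyDist [Fintype α] [Fintype ι] (h : IsConnectedTuple τ) :
    (Fintype.card ι - 1) * (2 * (Fintype.card α - 1)) ≤
      ∑ x ∈ univ.offDiag, cayleyDist (τ x.1) (τ x.2) := by
  classical
  rcases subsingleton_or_nontrivial ι with _ | _
  · simp [Nat.sub_eq_zero_of_le (Fintype.card_le_one_iff_subsingleton.2 ‹_›)]
  obtain ⟨c, hc, -⟩ := exists_cycleOn (univ : Finset ι)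
  rw [coe_univ] at hc
  refine card_sub_one_mul_le_sum_offDiag (fun i j => cayleyDist (τ i) (τ j))
    (fun i => hc.apply_ne Set.nontrivial_univ (Set.mem_univ i)) fun p => ?_
  have := (h.comp_surjective p.surjective).two_mul_card_le_sum_cayleyDist_cycle hc
  simp only [Function.comp_apply] at this
  lia

theorem sum_cayleyDist_add_one_eq_iff [Fintype α] [Nonempty α] [Fintype ι]
    (h : IsConnectedTuple τ) (ρ : Equiv.Perm α) :
    ∑ i, cayleyDist ρ (τ i) + 1 = Fintype.card α ↔
      ∑ x ∈ univ.offDiag, cayleyDist (τ x.1) (τ x.2) + 2 * ∑ i, cayleyDist ρ (τ i) +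
        2 * Fintype.card ι = 2 * (Fintype.card ι * Fintype.card α) := by
  have hstar := h.card_le_sum_cayleyDist_add_one ρ
  have hpairs := h.mul_le_sum_offDiag_cayleyDist
  have htriangle := sum_offDiag_cayleyDist_le ρ τ
  obtain ⟨m, hm⟩ := Nat.exists_eq_add_of_le' (Fintype.card_pos (α := α))
  rcases isEmpty_or_nonempty ι with _ | _
  · simp only [univ_eq_empty, offDiag_empty, sum_empty, Fintype.card_eq_zero] at hstar ⊢
    lia
  obtain ⟨n, hn⟩ := Nat.exists_eq_add_of_le' (Fintype.card_pos (α := ι))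
  simp only [hm, hn, Nat.add_sub_cancel] at *
  generalize ∑ i, cayleyDist ρ (τ i) = G at *
  constructor
  · rintro hG
    obtain rfl : G = m := by lia
    linarith
  · intro hG
    linarith

end IsConnectedTuple

section Faces

variable {k : ℕ}

lemma cayleyDist_add_cycleCount (σ τ : Equiv.Perm (Fin k)) :
    cayleyDist σ τ + cycleCount (σ * τ⁻¹) = k :=
  (cayleyDist_add_card_orbits σ τ).trans (Fintype.card_fin k)

lemma cycleCount_mul_inv_comm (σ τ : Equiv.Perm (Fin k)) :
    cycleCount (σ * τ⁻¹) = cycleCount (τ * σ⁻¹) := by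
  have hστ := cayleyDist_add_cycleCount σ τ
  have hτσ := cayleyDist_add_cycleCount τ σ
  rw [cayleyDist_comm] at hστ
  lia

lemma sum_cayleyDist_add_sum_cycleCount {ι : Type*} (s : Finset ι) (σ τ : ι → Equiv.Perm (Fin k)) :
    ∑ i ∈ s, cayleyDist (σ i) (τ i) + ∑ i ∈ s, cycleCount (σ i * (τ i)⁻¹) = #s * k := by
  simp [← sum_add_distrib, cayleyDist_add_cycleCount]

variable {D : ℕ} (σ : Fin (D + 1) → Equiv.Perm (Fin k))

lemma faceCount_eq_bubbleFaceCount_add :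
    faceCount σ = bubbleFaceCount σ + ∑ i, cycleCount (σ 0 * (Fin.tail σ i)⁻¹) := by
  simp [faceCount, bubbleFaceCount, sum_filter, Fintype.sum_prod_type, Fin.sum_univ_succ, Fin.tail,
    add_comm]

lemma bubbleFaceCount_eq_sum_tail :
    bubbleFaceCount σ =
      ∑ x : Fin D × Fin D with x.1 < x.2, cycleCount (Fin.tail σ x.1 * (Fin.tail σ x.2)⁻¹) := by
  simp [bubbleFaceCount, sum_filter, Fintype.sum_prod_type, Fin.sum_univ_succ, Fin.tail]

lemma faceCount_add_sum_cayleyDist :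
    faceCount σ + ∑ i, cayleyDist (σ 0) (Fin.tail σ i) = bubbleFaceCount σ + D * k := by
  have := sum_cayleyDist_add_sum_cycleCount univ (fun _ => σ 0) (Fin.tail σ)
  rw [card_univ, Fintype.card_fin] at this
  rw [faceCount_eq_bubbleFaceCount_add]
  lia

lemma sum_offDiag_cayleyDist_add_two_mul_bubbleFaceCount :
    ∑ x ∈ univ.offDiag, cayleyDist (Fin.tail σ x.1) (Fin.tail σ x.2) + 2 * bubbleFaceCount σ =
      D * (D - 1) * k := by
  have hpairs : #(univ : Finset (Fin D)).offDiag = D * (D - 1) := by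
    rw [offDiag_card, card_univ, Fintype.card_fin, Nat.mul_sub_one]
  rw [bubbleFaceCount_eq_sum_tail, ← smul_eq_mul 2,
    ← sum_offDiag_eq_two_nsmul fun i j => cycleCount_mul_inv_comm (Fin.tail σ i) (Fin.tail σ j),
    sum_cayleyDist_add_sum_cycleCount, hpairs]

lemma exponent_eq_one_iff :
    -(D - 1 : ℤ) * k + (faceCount σ : ℤ) - (bubbleFaceCount σ : ℤ) = 1 ↔
      ∑ i, cayleyDist (σ 0) (Fin.tail σ i) + 1 = k := by
  have := faceCount_add_sum_cayleyDist σ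
  zify at this ⊢
  constructor <;> intro h <;> linarith

lemma faceCount_eq_iff :
    faceCount σ = D * (D - 1) / 2 * k + D ↔
      ∑ x ∈ univ.offDiag, cayleyDist (Fin.tail σ x.1) (Fin.tail σ x.2) +
        2 * ∑ i, cayleyDist (σ 0) (Fin.tail σ i) + 2 * D = 2 * (D * k) := by
  have hfaces := faceCount_add_sum_cayleyDist σ
  have hbubble := sum_offDiag_cayleyDist_add_two_mul_bubbleFaceCount σ
  have hhalf : 2 * (D * (D - 1) / 2 * k) = D * (D - 1) * k := by
    rw [← mul_assoc, Nat.mul_div_cancel' (Nat.even_mul_pred_self D).two_dvd]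
  lia

lemma isConnectedTuple_tail {n : ℕ} {σ : Fin (n + 2) → Equiv.Perm (Fin k)}
    (h : bubbleCompCount σ = 1) : IsConnectedTuple (Fin.tail σ) := by
  have hbubble := (MulAction.pretransitive_iff_subsingleton_quotient _ _).2
    (Nat.card_eq_one_iff_unique.1 h).1
  refine ⟨fun x y => ?_⟩
  obtain ⟨⟨g, hg⟩, rfl⟩ := hbubble.exists_smul_eq x y
  refine ⟨⟨g, Subgroup.closure_mono ?_ hg⟩, rfl⟩
  rintro _ ⟨c, hc, rfl⟩
  obtain ⟨j, rfl⟩ := Fin.exists_succ_eq.2 (Fin.ne_zero_of_lt hc)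
  exact ⟨0, j, rfl⟩

end Faces

/-- Characterization of the leading-order terms: if the `D`-bubble of `σ` is connected,
the `N`-exponent attains its maximal value `1` if and only if `σ` has degree zero,
i.e. `F(σ) = D(D−1)/2·k + D`. -/
theorem leading_order_iff_degree_zero (k D : ℕ) (hk : 1 ≤ k) (hD : 2 ≤ D)
    (σ : Fin (D + 1) → Equiv.Perm (Fin k)) (hbub : bubbleCompCount σ = 1) :
    -(D - 1 : ℤ) * k + (faceCount σ : ℤ) - (bubbleFaceCount σ : ℤ) = 1 ↔
      faceCount σ = D * (D - 1) / 2 * k + D := by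
  obtain ⟨n, rfl⟩ := Nat.exists_eq_add_of_le' hD
  have : Nonempty (Fin k) := ⟨⟨0, hk⟩⟩
  have hconn : IsConnectedTuple (Fin.tail σ) := isConnectedTuple_tail hbub
  rw [exponent_eq_one_iff, faceCount_eq_iff]
  simpa only [Fintype.card_fin] using hconn.sum_cayleyDist_add_one_eq_iff (σ 0)
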